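/- Let n > 1 and let S = {±a_1,…,±a_n} where 0 < a_1 < … < a_n and gcd(a_1,…,a_n) = 1. Then χ(a_1,…,a_n) ≤ ⌊3n/2⌋ + 1, i.e., there exists a Borel proper (⌊3n/2⌋+1)-coloring of the Schreier graph G_S on F(2^ℤ). -/

import Mathlib

/-- The shift action of `ℤ` on `α^ℤ`: `(s · x)(n) = x(n + s)`. -/
def shift {α : Type*} (s : ℤ) (x : ℤ → α) : ℤ → α := fun n => x (n + s)

/-- The free part `F(2^ℤ)` of the shift action on `2^ℤ = (ℤ → Bool)`. -/
def FreePart : Set (ℤ → Bool) := {x | ∀ s : ℤ, s ≠ 0 → shift s x ≠ x}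

/-- `c` is a Borel proper coloring of the Schreier graph `G_S` on `F(2^ℤ)`,
where `S = {±a : a ∈ A}`: `c` is Borel and `c(x) ≠ c(s · x)` for all `x` and `s ∈ S`. -/
def IsBorelColoring (A : Finset ℕ) {k : ℕ}
    (c : {x : ℤ → Bool // x ∈ FreePart} → Fin k) : Prop :=
  Measurable c ∧
    ∀ (x : {x : ℤ → Bool // x ∈ FreePart}) (a : ℕ), a ∈ A →
      ∀ (h : shift (a : ℤ) x.1 ∈ FreePart), c x ≠ c ⟨shift (a : ℤ) x.1, h⟩

/-- The Borel chromatic number `χ(a₁, …, aₙ)` of the Schreier graph `G_S` on `F(2^ℤ)`,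
where `S = {±a : a ∈ A}`: the least `k` admitting a Borel proper `k`-coloring. -/
noncomputable def borelChromatic (A : Finset ℕ) : ℕ :=
  sInf {k : ℕ | ∃ c : {x : ℤ → Bool // x ∈ FreePart} → Fin k, IsBorelColoring A c}

/-!
A marker set cuts every orbit of a free Borel `ℤ`-action into long finite intervals. With `n`
distances, first fit colors each interval properly with `n + 1` colors, so the problem is to pass
from one interval to the next at the cost of a single extra color.

Let `h` be the first-fit coloring `g`, with values in `{0, …, n}`, after exchanging color `i ≥ 1`
with `n + 1 - i`. Suppose that `h` is used up to the start of an interval. On the new interval,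
the class `g = i` takes the color `n + 1 - i` permanently from time `2 * D * i` on, where `D`
bounds the distances; so class `0` takes the extra color `n + 1` at once. Points that are not yet
permanent are colored greedily. When class `j` becomes permanent, the classes `i < j` have been so
for a while, and a greedy point near that time belongs to a class above `j - 1`: by the first-fit
rule it has a predecessor in each of these `j` classes, which leaves at most `n - j` other
predecessors, and its color is at most `n - j`. It does not conflict with `n + 1 - j`. Once all
classes are permanent, class `0` moves from the color `n + 1` to the color `0`, which nobody else
uses any more: the coloring is `h` again and the extra color is free for the next transition.
-/

section FirstFit

/-- The minimal excluded natural number of a finite set: the color picked by a first-fit rule. -/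
noncomputable def mex (s : Finset ℕ) : ℕ := sInf {k | k ∉ s}

lemma mex_notMem (s : Finset ℕ) : mex s ∉ s :=
  Nat.sInf_mem (s := {k | k ∉ s}) (Infinite.exists_notMem_finset s)

lemma mem_of_lt_mex {s : Finset ℕ} {k : ℕ} (h : k < mex s) : k ∈ s :=
  not_not.1 (Nat.notMem_of_lt_sInf h)

lemma mex_add_card_le {s t : Finset ℕ} (hts : t ⊆ s) (ht : ∀ k ∈ t, mex s < k) :
    mex s + t.card ≤ s.card := by
  have hdisj : Disjoint (Finset.range (mex s)) t :=
    Finset.disjoint_left.2 fun k hk hkt => (ht k hkt).not_gt (Finset.mem_range.1 hk)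
  have hsub : Finset.range (mex s) ∪ t ⊆ s :=
    Finset.union_subset (fun k hk => mem_of_lt_mex (Finset.mem_range.1 hk)) hts
  simpa [Finset.card_union_of_disjoint hdisj] using Finset.card_le_card hsub

lemma mex_le_card (s : Finset ℕ) : mex s ≤ s.card := by
  simpa using mex_add_card_le (Finset.empty_subset s)

variable {A : Finset ℕ}

/-- The colors seen from `w` among its predecessors `w - a`, `a ∈ A`, in `ℕ`. -/
def predColors (A : Finset ℕ) (c : ℕ → ℕ) (w : ℕ) : Finset ℕ :=
  {a ∈ A | 0 < a ∧ a ≤ w}.image fun a => c (w - a)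

lemma mem_predColors {c : ℕ → ℕ} {w k : ℕ} :
    k ∈ predColors A c w ↔ ∃ a ∈ A, 0 < a ∧ a ≤ w ∧ c (w - a) = k := by
  simp [predColors, and_assoc]

lemma card_predColors_le (c : ℕ → ℕ) (w : ℕ) : (predColors A c w).card ≤ A.card :=
  Finset.card_image_le.trans (Finset.card_filter_le _ _)

/-- The first-fit extension to `ℕ` of a partial coloring `f`: from left to right, every vertex
outside the domain of `f` receives the least color not used by its predecessors. -/
noncomputable def greedyColor (A : Finset ℕ) (f : ℕ → Option ℕ) (w : ℕ) : ℕ :=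
  (f w).getD <| mex <|
    {a ∈ A | 0 < a ∧ a ≤ w}.attach.image fun a => greedyColor A f (w - a.1)
termination_by w
decreasing_by
  have := (Finset.mem_filter.1 a.2).2
  omega

variable {f : ℕ → Option ℕ} {w : ℕ}

lemma greedyColor_of_eq_some {k : ℕ} (h : f w = some k) : greedyColor A f w = k := by
  rw [greedyColor, h, Option.getD_some]

lemma greedyColor_of_eq_none (h : f w = none) :
    greedyColor A f w = mex (predColors A (greedyColor A f) w) := by
  rw [greedyColor, h, Option.getD_none]
  congr 1
  exact Finset.ext fun k => by simp [predColors]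

lemma greedyColor_ne_of_eq_none (h : f w = none) {a : ℕ} (ha : a ∈ A) (ha0 : 0 < a)
    (haw : a ≤ w) : greedyColor A f w ≠ greedyColor A f (w - a) := fun heq =>
  mex_notMem _ <| greedyColor_of_eq_none h ▸ mem_predColors.2 ⟨a, ha, ha0, haw, heq.symm⟩

/-- The first-fit coloring of `ℕ` with respect to the distances in `A`. -/
noncomputable def firstFit (A : Finset ℕ) : ℕ → ℕ := greedyColor A fun _ => none

lemma firstFit_le_card (A : Finset ℕ) (z : ℕ) : firstFit A z ≤ A.card := by
  rw [firstFit, greedyColor_of_eq_none rfl]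
  exact (mex_le_card _).trans (card_predColors_le _ _)

lemma firstFit_ne {a z : ℕ} (ha : a ∈ A) (ha0 : 0 < a) (haz : a ≤ z) :
    firstFit A z ≠ firstFit A (z - a) :=
  greedyColor_ne_of_eq_none rfl ha ha0 haz

lemma exists_firstFit_sub_eq {z i : ℕ} (h : i < firstFit A z) :
    ∃ a ∈ A, 0 < a ∧ a ≤ z ∧ firstFit A (z - a) = i := by
  rw [firstFit, greedyColor_of_eq_none rfl] at h
  exact mem_predColors.1 (mem_of_lt_mex h)

end FirstFit

section Splice

/-- The coloring `c` of `ℕ` splices two copies of `h`, the second one translated by `l`: it follows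
the first copy on `[0, l)` and the second one on `[l + N, ∞)`, and is proper at every vertex of
`[l, ∞)`. Here `l` is meant to be at least every `a ∈ A`, so that `l + z - a` is not truncated. -/
structure IsSplice {ι : Type*} (A : Finset ℕ) (h : ℕ → ι) (N l : ℕ) (c : ℕ → ι) : Prop where
  eq_of_lt : ∀ w < l, c w = h w
  add_eq_of_le : ∀ z, N ≤ z → c (l + z) = h z
  add_ne : ∀ z, ∀ a ∈ A, c (l + z) ≠ c (l + z - a)

/-- The coloring precolored by `p` on `[0, l)`, in which `l + z` with `firstFit A z = i` has the
color `A.card + 1 - i` as soon as `2 * D * i ≤ z`, and is colored greedily before that. -/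
noncomputable def transitionColor (A : Finset ℕ) (D : ℕ) (p : ℕ → ℕ) (l : ℕ) : ℕ → ℕ :=
  greedyColor A fun w =>
    if w < l then some (p w)
    else if 2 * D * firstFit A (w - l) ≤ w - l then some (A.card + 1 - firstFit A (w - l))
    else none

variable {A : Finset ℕ} {D l z : ℕ} {p : ℕ → ℕ}

lemma transitionColor_of_lt {w : ℕ} (hw : w < l) : transitionColor A D p l w = p w :=
  greedyColor_of_eq_some (if_pos hw)

lemma transitionColor_add_of_le (hz : 2 * D * firstFit A z ≤ z) :
    transitionColor A D p l (l + z) = A.card + 1 - firstFit A z :=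
  greedyColor_of_eq_some (by simp [hz])

/-- The delays `2 * D * i` are chosen for this bound: when `2 * D * j ≤ z + D`, the predecessors of
`z` in the first-fit classes `i < j` exist and already carry the `j` top colors, so at most
`A.card - j` predecessors are left to occupy the low ones. -/
lemma transitionColor_add_add_le_card (hD : ∀ a ∈ A, a ≤ D) {j : ℕ}
    (hz : z < 2 * D * firstFit A z) (hj : 2 * D * j ≤ z + D) :
    transitionColor A D p l (l + z) + j ≤ A.card := by
  set S := predColors A (transitionColor A D p l) (l + z)
  have hmex : transitionColor A D p l (l + z) = mex S :=
    greedyColor_of_eq_none (by simp [hz])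
  have hcard : S.card ≤ A.card := card_predColors_le _ _
  have hjz : j ≤ firstFit A z := by
    by_contra! hlt
    have := Nat.mul_le_mul_left (2 * D) hlt
    grind
  have hjA : j ≤ A.card := hjz.trans (firstFit_le_card A z)
  have htop : Finset.Ico (A.card + 2 - j) (A.card + 2) ⊆ S := by
    intro k hk
    rw [Finset.mem_Ico] at hk
    have hkj : A.card + 1 - k < j := by omega
    obtain ⟨a, ha, ha0, haz, hak⟩ := exists_firstFit_sub_eq (hkj.trans_le hjz)
    have haD := hD a ha
    have hdelay := Nat.mul_le_mul_left (2 * D) hkj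
    refine mem_predColors.2 ⟨a, ha, ha0, by omega, ?_⟩
    rw [Nat.add_sub_assoc haz, transitionColor_add_of_le (by grind), hak]
    omega
  have hlt : ∀ k ∈ Finset.Ico (A.card + 2 - j) (A.card + 2), mex S < k := by
    intro k hk
    by_contra! hle
    have hmexA : mex S ≤ A.card := (mex_le_card S).trans hcard
    rw [Finset.mem_Ico] at hk
    exact mex_notMem S (htop (Finset.mem_Ico.2 ⟨hk.1.trans hle, by omega⟩))
  have hadd := mex_add_card_le htop hlt
  rw [Nat.card_Ico] at hadd
  omega

lemma transitionColor_add_le (hD : ∀ a ∈ A, a ≤ D) (z : ℕ) :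
    transitionColor A D p l (l + z) ≤ A.card + 1 := by
  by_cases hz : 2 * D * firstFit A z ≤ z
  · rw [transitionColor_add_of_le hz]
    exact Nat.sub_le _ _
  · exact (transitionColor_add_add_le_card (j := 0) hD (not_le.1 hz) (by simp)).trans
      (Nat.le_succ _)

lemma transitionColor_add_ne (hpos : ∀ a ∈ A, 0 < a) (hD : ∀ a ∈ A, a ≤ D) (hl : D ≤ l)
    (hp : ∀ w < l, p w ≤ A.card) {a : ℕ} (ha : a ∈ A) (z : ℕ) :
    transitionColor A D p l (l + z) ≠ transitionColor A D p l (l + z - a) := by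
  have ha0 := hpos a ha
  have haD := hD a ha
  have hgA := firstFit_le_card A z
  rcases lt_or_ge z (2 * D * firstFit A z) with hz | hz
  · exact greedyColor_ne_of_eq_none (by simp [hz]) ha ha0 (by omega)
  rw [transitionColor_add_of_le hz]
  rcases lt_or_ge z a with haz | haz
  · have hg0 : firstFit A z = 0 := by
      by_contra hg
      have := Nat.mul_le_mul_left (2 * D) (Nat.pos_of_ne_zero hg)
      omega
    have := hp (l + z - a) (by omega)
    rw [transitionColor_of_lt (by omega), hg0]
    omega
  rw [Nat.add_sub_assoc haz]
  rcases lt_or_ge (z - a) (2 * D * firstFit A (z - a)) with hza | hza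
  · have := transitionColor_add_add_le_card (p := p) (l := l) (j := firstFit A z) hD hza (by omega)
    omega
  · have hne := firstFit_ne ha ha0 haz
    have := firstFit_le_card A (z - a)
    rw [transitionColor_add_of_le hza]
    omega

/-- The stationary coloring reached after a transition: the color `A.card + 1` of the first-fit
class `0` is replaced by `0`, which frees the top color for the next transition. -/
noncomputable def terminalColor (A : Finset ℕ) (z : ℕ) : ℕ :=
  if firstFit A z = 0 then 0 else A.card + 1 - firstFit A z

lemma terminalColor_le_card (A : Finset ℕ) (z : ℕ) : terminalColor A z ≤ A.card := by
  unfold terminalColor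
  split_ifs <;> omega

lemma terminalColor_ne {i z : ℕ} (hi : i ≤ A.card) (hne : firstFit A z ≠ i) :
    terminalColor A z ≠ A.card + 1 - i := by
  have := firstFit_le_card A z
  unfold terminalColor
  split_ifs <;> omega

lemma terminalColor_ne_sub (hpos : ∀ a ∈ A, 0 < a) {a : ℕ} (ha : a ∈ A) (haz : a ≤ z) :
    terminalColor A z ≠ terminalColor A (z - a) := by
  have hne := firstFit_ne ha (hpos a ha) haz
  have := firstFit_le_card A z
  have := firstFit_le_card A (z - a)
  unfold terminalColor
  split_ifs <;> omega

/-- The transition from `p` to the terminal coloring, which is adopted once all first-fit classes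
have been in their permanent colors for a distance of at least `D`. -/
noncomputable def spliceColor (A : Finset ℕ) (D : ℕ) (p : ℕ → ℕ) (l w : ℕ) : ℕ :=
  if l + (2 * D * A.card + D) ≤ w then terminalColor A (w - l) else transitionColor A D p l w

lemma spliceColor_of_lt {w : ℕ} (hw : w < l) : spliceColor A D p l w = p w := by
  rw [spliceColor, if_neg (by omega), transitionColor_of_lt hw]

lemma spliceColor_add_of_le (hz : 2 * D * A.card + D ≤ z) :
    spliceColor A D p l (l + z) = terminalColor A z := by
  simp [spliceColor, hz]

lemma spliceColor_le (hD : ∀ a ∈ A, a ≤ D) (hp : ∀ w < l, p w ≤ A.card) (w : ℕ) :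
    spliceColor A D p l w ≤ A.card + 1 := by
  rcases lt_or_ge w l with hw | hw
  · exact (spliceColor_of_lt hw).trans_le ((hp w hw).trans (Nat.le_succ _))
  obtain ⟨z, rfl⟩ := Nat.exists_eq_add_of_le hw
  unfold spliceColor
  split_ifs
  · exact (terminalColor_le_card _ _).trans (Nat.le_succ _)
  · exact transitionColor_add_le hD z

lemma spliceColor_add_ne (hpos : ∀ a ∈ A, 0 < a) (hD : ∀ a ∈ A, a ≤ D) (hl : D ≤ l)
    (hp : ∀ w < l, p w ≤ A.card) {a : ℕ} (ha : a ∈ A) (z : ℕ) :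
    spliceColor A D p l (l + z) ≠ spliceColor A D p l (l + z - a) := by
  have haD := hD a ha
  rcases lt_or_ge z (2 * D * A.card + D) with hz | hz
  · rw [spliceColor, if_neg (by omega), spliceColor, if_neg (by omega)]
    exact transitionColor_add_ne hpos hD hl hp ha z
  have haz : a ≤ z := by omega
  rw [spliceColor_add_of_le hz, Nat.add_sub_assoc haz]
  rcases lt_or_ge (z - a) (2 * D * A.card + D) with hza | hza
  · have hgA := firstFit_le_card A (z - a)
    have hdelay := Nat.mul_le_mul_left (2 * D) hgA
    rw [spliceColor, if_neg (by omega), transitionColor_add_of_le (by omega)]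
    exact terminalColor_ne hgA (firstFit_ne ha (hpos a ha) haz)
  · rw [spliceColor_add_of_le hza]
    exact terminalColor_ne_sub hpos ha haz

theorem exists_isSplice (hpos : ∀ a ∈ A, 0 < a) (hD : ∀ a ∈ A, a ≤ D) :
    ∃ (h : ℕ → Fin (A.card + 2)) (N : ℕ), ∀ l, D ≤ l → ∃ c, IsSplice A h N l c := by
  have hp := terminalColor_le_card A
  refine ⟨fun z => ⟨terminalColor A z, (hp z).trans_lt (by omega)⟩, 2 * D * A.card + D,
    fun l hl => ⟨fun w => ⟨spliceColor A D (terminalColor A) l w,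
      Nat.lt_succ_of_le (spliceColor_le hD (fun w _ => hp w) w)⟩, ?_, ?_, ?_⟩⟩
  · exact fun w hw => Fin.ext (spliceColor_of_lt hw)
  · exact fun z hz => Fin.ext (spliceColor_add_of_le hz)
  · exact fun z a ha heq =>
      spliceColor_add_ne hpos hD hl (fun w _ => hp w) ha z (congrArg Fin.val heq)

end Splice

section IndependentSets

variable {X G : Type*} [AddGroup G] [AddAction G X]

/-- The points of color `n` of the independent set for translations by `F` that is built greedily,
one color of `c` after the other. -/
def greedyIndep (F : Finset G) (c : X → ℕ) (n : ℕ) : Set X :=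
  {x | c x = n ∧ ∀ m < n, ∀ s ∈ F, s +ᵥ x ∉ greedyIndep F c m}

lemma mem_greedyIndep {F : Finset G} {c : X → ℕ} {n : ℕ} {x : X} : x ∈ greedyIndep F c n ↔
    c x = n ∧ ∀ m < n, ∀ s ∈ F, s +ᵥ x ∉ greedyIndep F c m := by
  rw [greedyIndep, Set.mem_ofPred_eq]

variable [MeasurableSpace X]

lemma exists_measurable_nat_coloring_of_forall_ne [MeasurableSpace.CountablySeparated X]
    {f : X → X} (hf : Measurable f) (hne : ∀ x, f x ≠ x) :
    ∃ c : X → ℕ, Measurable c ∧ ∀ x, c (f x) ≠ c x := by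
  classical
  obtain ⟨b, hb, hinj⟩ := MeasurableSpace.measurable_injection_nat_bool_of_countablySeparated X
  have hdiff (x : X) : ∃ n, b (f x) n ≠ b x n := Function.ne_iff.1 (hinj.ne (hne x))
  have hbit : Measurable fun q : X × ℕ => b q.1 q.2 :=
    measurable_from_prod_countable_left fun _ => hb.eval
  have hfind : Measurable fun x => Nat.find (hdiff x) := measurable_find hdiff fun _ =>
    (measurableSet_eq_fun (hb.comp hf).eval hb.eval).compl
  obtain ⟨e, he⟩ := exists_injective_nat (ℕ × Bool)
  refine ⟨fun x => e (Nat.find (hdiff x), b x (Nat.find (hdiff x))), ?_, ?_⟩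
  · exact Measurable.of_discrete.comp
      (hfind.prodMk (hbit.comp (measurable_id.prodMk hfind)))
  · intro x hx
    obtain ⟨hfst, hsnd⟩ := Prod.mk.inj (he hx)
    rw [hfst] at hsnd
    exact Nat.find_spec (hdiff x) hsnd

lemma exists_measurable_nat_coloring [MeasurableSpace.CountablySeparated X] {ι : Type*} [Finite ι]
    {f : ι → X → X} (hf : ∀ i, Measurable (f i)) (hne : ∀ i x, f i x ≠ x) :
    ∃ c : X → ℕ, Measurable c ∧ ∀ i x, c (f i x) ≠ c x := by
  choose c hc hcne using fun i => exists_measurable_nat_coloring_of_forall_ne (hf i) (hne i)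
  obtain ⟨e, he⟩ := exists_injective_nat (ι → ℕ)
  exact ⟨fun x => e fun i => c i x, Measurable.of_discrete.comp (measurable_pi_lambda _ hc),
    fun i x heq => hcne i x (congrFun (he heq) i)⟩

variable [MeasurableConstVAdd G X]

lemma measurableSet_greedyIndep (F : Finset G) {c : X → ℕ} (hc : Measurable c) (n : ℕ) :
    MeasurableSet (greedyIndep F c n) := by
  induction n using Nat.strong_induction_on with
  | _ n ih =>
    rw [greedyIndep]
    simp only [Set.ofPred_and, Set.ofPred_forall]
    exact (hc (measurableSet_singleton n)).inter <| .biInter (Set.to_countable _) fun m hm =>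
      Finset.measurableSet_biInter F fun s _ => (measurable_const_vadd s (ih m hm)).compl

theorem exists_measurableSet_maximal_independent [MeasurableSpace.CountablySeparated X]
    (F : Finset G) (hneg : ∀ s ∈ F, -s ∈ F) (hfree : ∀ s ∈ F, ∀ x : X, s +ᵥ x ≠ x) :
    ∃ M : Set X, MeasurableSet M ∧ (∀ x ∈ M, ∀ s ∈ F, s +ᵥ x ∉ M) ∧
      ∀ x ∉ M, ∃ s ∈ F, s +ᵥ x ∈ M := by
  obtain ⟨c, hc, hcne⟩ := exists_measurable_nat_coloring (f := fun (s : F) (x : X) => s.1 +ᵥ x)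
    (fun s => measurable_const_vadd s.1) (fun s => hfree s.1 s.2)
  refine ⟨⋃ n, greedyIndep F c n, .iUnion (measurableSet_greedyIndep F hc), ?_, ?_⟩
  · intro x hx s hs hsx
    obtain ⟨n, hn⟩ := Set.mem_iUnion.1 hx
    obtain ⟨m, hm⟩ := Set.mem_iUnion.1 hsx
    obtain ⟨hxn, hxF⟩ := mem_greedyIndep.1 hn
    obtain ⟨hxm, hsxF⟩ := mem_greedyIndep.1 hm
    rcases lt_trichotomy m n with hlt | heq | hlt
    · exact hxF m hlt s hs hm
    · exact hcne ⟨s, hs⟩ x (hxm.trans (heq.trans hxn.symm))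
    · exact hsxF n hlt (-s) (hneg s hs) (by rwa [neg_vadd_vadd])
  · intro x hx
    have hxc : x ∉ greedyIndep F c (c x) := fun h => hx (Set.mem_iUnion_of_mem _ h)
    rw [mem_greedyIndep] at hxc
    push Not at hxc
    obtain ⟨m, -, s, hs, hsm⟩ := hxc rfl
    exact ⟨s, hs, Set.mem_iUnion_of_mem m hsm⟩

end IndependentSets

section Markers

variable {X : Type*} [AddAction ℤ X]

/-- The time elapsed since the last visit to `M`, which is the junk value `0` if the backward orbit
of `x` does not meet `M`. -/
noncomputable def lastVisit (M : Set X) (x : X) : ℕ := sInf {d : ℕ | -(d : ℤ) +ᵥ x ∈ M}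

/-- The time between the last two visits to `M`. -/
noncomputable def returnTime (M : Set X) (x : X) : ℕ :=
  lastVisit M (-((lastVisit M x : ℤ) + 1) +ᵥ x) + 1

variable {M : Set X}

lemma lastVisit_neg_vadd {x : X} {a : ℕ} (ha : a ≤ lastVisit M x) :
    lastVisit M (-(a : ℤ) +ᵥ x) = lastVisit M x - a := by
  have hadd := Nat.sInf_add (p := fun d : ℕ => -(d : ℤ) +ᵥ x ∈ M) ha
  have hset : {d : ℕ | -(d : ℤ) +ᵥ (-(a : ℤ) +ᵥ x) ∈ M} =
      {d : ℕ | -((d + a : ℕ) : ℤ) +ᵥ x ∈ M} := by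
    ext d
    rw [Set.mem_ofPred_eq, vadd_vadd, Set.mem_ofPred_eq, Nat.cast_add, neg_add]
  rw [lastVisit, hset, lastVisit, ← hadd, Nat.add_sub_cancel]

lemma returnTime_neg_vadd {x : X} {a : ℕ} (ha : a ≤ lastVisit M x) :
    returnTime M (-(a : ℤ) +ᵥ x) = returnTime M x := by
  rw [returnTime, lastVisit_neg_vadd ha, vadd_vadd, returnTime]
  congr 3
  omega

lemma lastVisit_neg_vadd_of_lt {x : X} {a : ℕ} (hlt : lastVisit M x < a)
    (hle : a ≤ returnTime M x + lastVisit M x) :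
    lastVisit M (-(a : ℤ) +ᵥ x) = returnTime M x + lastVisit M x - a := by
  have hvisit := lastVisit_neg_vadd (M := M) (x := -((lastVisit M x : ℤ) + 1) +ᵥ x)
    (a := a - (lastVisit M x + 1)) (by rw [returnTime] at hle; omega)
  rw [vadd_vadd, show -((a - (lastVisit M x + 1) : ℕ) : ℤ) + -((lastVisit M x : ℤ) + 1) = -(a : ℤ)
    by omega] at hvisit
  rw [hvisit, returnTime]
  omega

variable [MeasurableSpace X] {L : ℕ}

/-- A marker set for a `ℤ`-action: a measurable set that every orbit visits arbitrarily far in the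
past, at times more than `L` apart. -/
structure IsMarkerSet (M : Set X) (L : ℕ) : Prop where
  measurableSet : MeasurableSet M
  vadd_notMem : ∀ x ∈ M, ∀ s : ℕ, 0 < s → s ≤ L → (s : ℤ) +ᵥ x ∉ M
  exists_neg_vadd_mem : ∀ x, ∃ d : ℕ, -(d : ℤ) +ᵥ x ∈ M

theorem exists_isMarkerSet (X : Type*) [MeasurableSpace X] [MeasurableSpace.CountablySeparated X]
    [AddAction ℤ X] [MeasurableConstVAdd ℤ X] [IsCancelVAdd ℤ X] (L : ℕ) :
    ∃ M : Set X, IsMarkerSet M L := by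
  have hfree : ∀ s ∈ (Finset.Icc (-L : ℤ) L).erase 0, ∀ x : X, s +ᵥ x ≠ x := fun s hs x hsx =>
    Finset.ne_of_mem_erase hs (IsCancelVAdd.eq_zero_of_vadd hsx)
  have hneg : ∀ s ∈ (Finset.Icc (-L : ℤ) L).erase 0, -s ∈ (Finset.Icc (-L : ℤ) L).erase 0 := by
    simp only [Finset.mem_erase, Finset.mem_Icc]
    omega
  obtain ⟨M, hM, hindep, hmax⟩ := exists_measurableSet_maximal_independent _ hneg hfree
  refine ⟨M, hM, fun x hx s hs hsL => hindep x hx s ?_, fun x => ?_⟩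
  · simp only [Finset.mem_erase, Finset.mem_Icc]
    omega
  by_cases hx : -(L : ℤ) +ᵥ x ∈ M
  · exact ⟨L, hx⟩
  · obtain ⟨s, hs, hsM⟩ := hmax _ hx
    have hsL := Finset.mem_Icc.1 (Finset.mem_of_mem_erase hs)
    refine ⟨(L - s).toNat, ?_⟩
    rwa [vadd_vadd, show s + -(L : ℤ) = -((L - s).toNat : ℤ) by omega] at hsM

namespace IsMarkerSet

lemma neg_lastVisit_vadd_mem (hM : IsMarkerSet M L) (x : X) : -(lastVisit M x : ℤ) +ᵥ x ∈ M :=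
  Nat.sInf_mem (hM.exists_neg_vadd_mem x)

lemma lt_returnTime (hM : IsMarkerSet M L) (x : X) : L < returnTime M x := by
  by_contra! hle
  have hprev := hM.neg_lastVisit_vadd_mem (-((lastVisit M x : ℤ) + 1) +ᵥ x)
  have hlast := hM.neg_lastVisit_vadd_mem x
  refine hM.vadd_notMem _ hprev (returnTime M x) (Nat.succ_pos _) hle ?_
  rw [vadd_vadd, vadd_vadd]
  convert hlast using 2
  rw [returnTime]
  omega

variable [MeasurableConstVAdd ℤ X]

lemma measurable_lastVisit (hM : IsMarkerSet M L) : Measurable (lastVisit M) := by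
  classical
  have hfind : lastVisit M = fun x => Nat.find (hM.exists_neg_vadd_mem x) :=
    funext fun x => Nat.sInf_def (hM.exists_neg_vadd_mem x)
  rw [hfind]
  exact measurable_find _ fun d => measurable_const_vadd (-(d : ℤ)) hM.measurableSet

lemma measurable_returnTime (hM : IsMarkerSet M L) : Measurable (returnTime M) := by
  have hvisit : Measurable fun q : X × ℕ => lastVisit M (-((q.2 : ℤ) + 1) +ᵥ q.1) :=
    measurable_from_prod_countable_left fun d =>
      hM.measurable_lastVisit.comp (measurable_const_vadd (-((d : ℤ) + 1)))
  have hprev := hvisit.comp (measurable_id.prodMk hM.measurable_lastVisit)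
  exact (Measurable.of_discrete (f := fun n : ℕ => n + 1)).comp hprev

end IsMarkerSet

variable [MeasurableConstVAdd ℤ X]

theorem exists_measurable_coloring_of_isSplice [MeasurableSpace.CountablySeparated X]
    [IsCancelVAdd ℤ X] {ι : Type*} [MeasurableSpace ι] {A : Finset ℕ} {h : ℕ → ι} {N D : ℕ}
    (hsplice : ∀ l, D ≤ l → ∃ c, IsSplice A h N l c) :
    ∃ c : X → ι, Measurable c ∧ ∀ x, ∀ a ∈ A, c x ≠ c (-(a : ℤ) +ᵥ x) := by
  obtain ⟨M, hM⟩ := exists_isMarkerSet X (max D (N + A.sup id))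
  have hlong (x : X) : D ≤ returnTime M x ∧ N + A.sup id ≤ returnTime M x :=
    max_le_iff.1 (hM.lt_returnTime x).le
  have : Nonempty ι := ⟨h 0⟩
  choose! c hc using hsplice
  refine ⟨fun x => c (returnTime M x) (returnTime M x + lastVisit M x), ?_, fun x a ha => ?_⟩
  · exact (Measurable.of_discrete (f := fun q : ℕ × ℕ => c q.1 (q.1 + q.2))).comp
      (hM.measurable_returnTime.prodMk hM.measurable_lastVisit)
  have haA : a ≤ A.sup id := Finset.le_sup (f := id) ha
  have hxl := hlong x
  have hyl := hlong (-(a : ℤ) +ᵥ x)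
  have hne := (hc _ hxl.1).add_ne (lastVisit M x) a ha
  beta_reduce
  rcases le_or_gt a (lastVisit M x) with hle | hlt
  · rw [Nat.add_sub_assoc hle] at hne
    rwa [returnTime_neg_vadd hle, lastVisit_neg_vadd hle]
  · have hvisit := lastVisit_neg_vadd_of_lt hlt (by omega)
    rw [(hc _ hyl.1).add_eq_of_le _ (by omega), hvisit]
    rwa [(hc _ hxl.1).eq_of_lt (returnTime M x + lastVisit M x - a) (by omega)] at hne

theorem exists_measurable_fin_coloring (X : Type*) [MeasurableSpace X]
    [MeasurableSpace.CountablySeparated X] [AddAction ℤ X] [MeasurableConstVAdd ℤ X]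
    [IsCancelVAdd ℤ X] {A : Finset ℕ} (hpos : ∀ a ∈ A, 0 < a) :
    ∃ c : X → Fin (A.card + 2), Measurable c ∧ ∀ x, ∀ a ∈ A, c x ≠ c (-(a : ℤ) +ᵥ x) := by
  obtain ⟨h, N, hsplice⟩ := exists_isSplice hpos fun _ ha => Finset.le_sup (f := id) ha
  exact exists_measurable_coloring_of_isSplice hsplice

end Markers

section FreePart

lemma shift_zero {α : Type*} (x : ℤ → α) : shift 0 x = x :=
  funext fun n => congrArg x (add_zero n)

lemma shift_add {α : Type*} (s t : ℤ) (x : ℤ → α) : shift (s + t) x = shift s (shift t x) :=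
  funext fun n => congrArg x (add_assoc n s t).symm

lemma measurable_shift {α : Type*} [MeasurableSpace α] (s : ℤ) :
    Measurable (shift s : (ℤ → α) → ℤ → α) :=
  measurable_pi_lambda _ fun n => measurable_pi_apply (n + s)

lemma shift_mem_freePart (t : ℤ) {x : ℤ → Bool} (hx : x ∈ FreePart) : shift t x ∈ FreePart := by
  intro s hs heq
  refine hx s hs ?_
  have hback := congrArg (shift (-t)) heq
  rwa [← shift_add, ← shift_add, ← shift_add, neg_add_cancel, shift_zero,
    neg_add_cancel_comm] at hback

instance : AddAction ℤ {x : ℤ → Bool // x ∈ FreePart} where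
  vadd s x := ⟨shift s x.1, shift_mem_freePart s x.2⟩
  zero_vadd x := Subtype.ext (shift_zero x.1)
  add_vadd s t x := Subtype.ext (shift_add s t x.1)

instance : MeasurableConstVAdd ℤ {x : ℤ → Bool // x ∈ FreePart} where
  measurable_const_vadd s := ((measurable_shift s).comp measurable_subtype_coe).subtype_mk

instance : IsCancelVAdd ℤ {x : ℤ → Bool // x ∈ FreePart} :=
  isCancelVAdd_iff_eq_zero_of_vadd_eq.2 fun s x hsx =>
    not_not.1 fun hs => x.2 s hs (congrArg Subtype.val hsx)

variable {A : Finset ℕ} {k m : ℕ} {c : {x : ℤ → Bool // x ∈ FreePart} → Fin k}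

lemma IsBorelColoring.castLE (hc : IsBorelColoring A c) (hkm : k ≤ m) :
    IsBorelColoring A (Fin.castLE hkm ∘ c) :=
  ⟨Measurable.of_discrete.comp hc.1, fun x a ha hx heq =>
    hc.2 x a ha hx (Fin.castLE_injective hkm heq)⟩

lemma borelChromatic_le (hc : IsBorelColoring A c) : borelChromatic A ≤ k :=
  Nat.sInf_le ⟨c, hc⟩

theorem borelChromatic_le_three_halves_general (A : Finset ℕ) (hpos : ∀ a ∈ A, 0 < a) :
    (∃ c : {x : ℤ → Bool // x ∈ FreePart} → Fin (A.card + 2), IsBorelColoring A c) ∧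
      borelChromatic A ≤ A.card + 2 := by
  obtain ⟨c, hc, hne⟩ := exists_measurable_fin_coloring {x : ℤ → Bool // x ∈ FreePart} hpos
  have hborel : IsBorelColoring A c := by
    refine ⟨hc, fun x a ha _ heq => hne ((a : ℤ) +ᵥ x) a ha ?_⟩
    rw [neg_vadd_vadd]
    exact heq.symm
  exact ⟨⟨c, hborel⟩, borelChromatic_le hborel⟩

end FreePart

/-- For `n > 1`, `χ(a₁,…,aₙ) ≤ ⌊3n/2⌋ + 1`: there is a Borel proper
`(⌊3n/2⌋+1)`-coloring of `G_S` on `F(2^ℤ)`. -/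
theorem borelChromatic_le_three_halves
    (A : Finset ℕ) (hpos : ∀ a ∈ A, 0 < a) (hgcd : A.gcd id = 1) (hn : 1 < A.card) :
    (∃ c : {x : ℤ → Bool // x ∈ FreePart} → Fin (3 * A.card / 2 + 1),
        IsBorelColoring A c) ∧
    borelChromatic A ≤ 3 * A.card / 2 + 1 := by
  obtain ⟨⟨c, hc⟩, hle⟩ := borelChromatic_le_three_halves_general A hpos
  exact ⟨⟨_, hc.castLE (by omega)⟩, hle.trans (by omega)⟩
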